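/- Let n ≥ 1 be an integer and b a real number with 4 < n + 2b < 6, and set s_c = (n + 2b − 4)/2, so 0 < s_c < 1. Let Qψ > 0 and define ξ by ξ² = ( (n+2b)^{(n+2b)/2} · (6−n−2b)^{(4−n−2b)/2} / 4 ) · Qψ, and set Kψ = ((n+2b)/(6−n−2b))·Qψ and Eψ = ((n+2b−4)/(6−n−2b))·Qψ. Then: (i) ( ξ/(s_c+2) )² = Qψ^{1−s_c} · Kψ^{s_c}, and (ii) ( s_c/(s_c+2) )^{s_c} · ( ξ/(s_c+2) )² = Qψ^{1−s_c} · Eψ^{s_c}, where all powers are real powers (rpow). -/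

import Mathlib

/-- The mass factors of a product of interpolated powers recombine. -/
lemma rpow_one_sub_mul_mul_rpow {q c : ℝ} (hq : 0 < q) (hc : 0 ≤ c) (s : ℝ) :
    q ^ (1 - s) * (c * q) ^ s = c ^ s * q := by
  rw [Real.mul_rpow hc hq.le, mul_left_comm, ← Real.rpow_add hq, sub_add_cancel, Real.rpow_one]


/-- threshold computation: with `4 < n + 2b < 6`, `s_c = (n+2b−4)/2`,
`Qψ > 0`, `ξ² = ((n+2b)^{(n+2b)/2}(6−n−2b)^{(4−n−2b)/2}/4)·Qψ`,
`Kψ = ((n+2b)/(6−n−2b))Qψ` and `Eψ = ((n+2b−4)/(6−n−2b))Qψ`, one has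
`(ξ/(s_c+2))² = Qψ^{1−s_c} Kψ^{s_c}` and
`(s_c/(s_c+2))^{s_c} (ξ/(s_c+2))² = Qψ^{1−s_c} Eψ^{s_c}`. -/
theorem stmt14 (n : ℕ) (hn : 1 ≤ n) (b : ℝ)
    (h4 : 4 < (n : ℝ) + 2 * b) (h6 : (n : ℝ) + 2 * b < 6)
    (sc : ℝ) (hsc : sc = ((n : ℝ) + 2 * b - 4) / 2)
    (Qψ : ℝ) (hQ : 0 < Qψ)
    (ξ : ℝ) (hξ : ξ ^ 2 = (((n : ℝ) + 2 * b) ^ (((n : ℝ) + 2 * b) / 2) *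
        (6 - (n : ℝ) - 2 * b) ^ ((4 - (n : ℝ) - 2 * b) / 2) / 4) * Qψ)
    (Kψ : ℝ) (hK : Kψ = (((n : ℝ) + 2 * b) / (6 - (n : ℝ) - 2 * b)) * Qψ)
    (Eψ : ℝ) (hE : Eψ = (((n : ℝ) + 2 * b - 4) / (6 - (n : ℝ) - 2 * b)) * Qψ) :
    (ξ / (sc + 2)) ^ 2 = Qψ ^ (1 - sc) * Kψ ^ sc ∧
    (sc / (sc + 2)) ^ sc * (ξ / (sc + 2)) ^ 2 = Qψ ^ (1 - sc) * Eψ ^ sc := by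
  have hm : 0 < (n : ℝ) + 2 * b := by linarith
  have hd : 0 < 6 - (n : ℝ) - 2 * b := by linarith
  have hs : sc + 2 = ((n : ℝ) + 2 * b) / 2 := by rw [hsc]; ring
  have hξ_sq : (ξ / (sc + 2)) ^ 2 =
      (((n : ℝ) + 2 * b) / (6 - (n : ℝ) - 2 * b)) ^ sc * Qψ := by
    have hexp : (4 - (n : ℝ) - 2 * b) / 2 = -sc := by rw [hsc]; ring
    rw [div_pow, hξ, hexp, ← hs, Real.rpow_add hm, Real.rpow_neg hd.le, Real.rpow_two,
      Real.div_rpow hm.le hd.le, hs]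
    field_simp
    ring
  refine ⟨by rw [hξ_sq, hK, rpow_one_sub_mul_mul_rpow hQ (by positivity)], ?_⟩
  have hsc_pos : 0 < sc := by linarith
  have hratio : ((n : ℝ) + 2 * b - 4) / (6 - (n : ℝ) - 2 * b) =
      sc / (sc + 2) * (((n : ℝ) + 2 * b) / (6 - (n : ℝ) - 2 * b)) := by
    rw [hs, hsc]
    field_simp
  rw [hξ_sq, hE, hratio, rpow_one_sub_mul_mul_rpow hQ (by positivity),
    Real.mul_rpow (by positivity) (by positivity), mul_assoc]
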